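/- Let κ > -1 and ρ > -1 be real and let m, n be nonnegative integers. Then for every z ∈ ℂ with z ≠ 0 and every w ∈ ℂ, the creation operator ∇^{κ,ρ} raises the first index of the fractional Zernike functions: -[(1-zw) · D[u ↦ Z^{κ+1,ρ}_{m,n}(u,w)](z) - ((κ+ρ+1)·w - ρ/z) · Z^{κ+1,ρ}_{m,n}(z,w)] = Z^{κ,ρ}_{m+1,n}(z,w), where D denotes the complex derivative in u with w held fixed. -/

import Mathlib

/-!
Rewriting the ratios of Gamma values as Pochhammer symbols makes every coefficient polynomial in
`κ` and `ρ`, so that `Z^{κ,ρ}_{m,n}` is a binomial sum `∑ (m choose j) T^{κ}_{j,m-j}` of terms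
which make sense over any normed field. The creation operator acts on a single term by
`∇ T^{κ+1}_{j,k} = T^{κ}_{j,k+1} + T^{κ}_{j+1,k}`, so summing against the binomial coefficients
raises `m` by one through Pascal's rule.
-/

open Complex Finset

/-- The fractional Zernike function `Z^{κ,ρ}_{m,n}(z,w)`, viewed as a function of two
independent complex variables. -/
noncomputable def fracZernike (κ ρ : ℝ) (m n : ℕ) (z w : ℂ) : ℂ :=
  ∑ j ∈ Finset.range (m + 1),
    ((-1 : ℂ) ^ j * (Nat.factorial m : ℂ) * Complex.Gamma ((n : ℂ) + ρ + 1) *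
        Complex.Gamma ((κ : ℂ) + m + 1) /
      ((Nat.factorial j : ℂ) * (Nat.factorial (m - j) : ℂ) *
        Complex.Gamma ((n : ℂ) + ρ - j + 1) * Complex.Gamma ((κ : ℂ) + j + 1))) *
    (1 - z * w) ^ j * z ^ ((n : ℤ) - (j : ℤ)) * w ^ (m - j)


theorem ascPochhammer_succ_eval_left {R : Type*} [CommSemiring R] (k : ℕ) (x : R) :
    (ascPochhammer R (k + 1)).eval x = x * (ascPochhammer R k).eval (x + 1) := by
  simp [ascPochhammer_succ_left]

theorem inv_Gamma_eq_ascPochhammer_mul_inv_Gamma (s : ℂ) (k : ℕ) :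
    (Gamma s)⁻¹ = (ascPochhammer ℂ k).eval s * (Gamma (s + k))⁻¹ := by
  induction k with
  | zero => simp
  | succ k ih =>
    rw [ih, ascPochhammer_succ_eval, one_div_Gamma_eq_self_mul_one_div_Gamma_add_one (s + k),
      Nat.cast_succ, ← add_assoc, mul_assoc]

-- Here `s` itself may be a pole: then `Γ s = 0` by convention, and both sides vanish.
theorem Gamma_add_natCast_div_Gamma {s : ℂ} {k : ℕ} (h : Gamma (s + k) ≠ 0) :
    Gamma (s + k) / Gamma s = (ascPochhammer ℂ k).eval s := by
  rw [div_eq_mul_inv, inv_Gamma_eq_ascPochhammer_mul_inv_Gamma s k, mul_left_comm,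
    mul_inv_cancel₀ h, mul_one]

theorem Gamma_add_natCast_add_one_ne_zero {x : ℝ} (hx : -1 < x) (k : ℕ) :
    Gamma ((x : ℂ) + k + 1) ≠ 0 := by
  refine Gamma_ne_zero_of_re_pos ?_
  simp only [add_re, ofReal_re, natCast_re, one_re]
  linarith [k.cast_nonneg (α := ℝ)]

section Pochhammer

variable {K : Type*} [Field K]

/-- The term `T^κ_{j,k}` of bidegree `(j, k)` in `(1 - z w, w)` in the expansion of a fractional
Zernike function, stripped of its binomial coefficient. -/
noncomputable def zernikeTerm (κ ρ : K) (n : ℤ) (j k : ℕ) (z w : K) : K :=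
  (-1) ^ j * (descPochhammer K j).eval (n + ρ) * (ascPochhammer K k).eval (κ + j + 1) * w ^ k *
    ((1 - z * w) ^ j * z ^ (n - j))

/-- The fractional Zernike function with its ratios of Gamma values written as Pochhammer symbols:
`Γ(n+ρ+1) / Γ(n+ρ-j+1)` as a falling and `Γ(κ+m+1) / Γ(κ+j+1)` as a rising one. It is defined for
all parameters in any field and all integers `n`. -/
noncomputable def pochhammerZernike (κ ρ : K) (m : ℕ) (n : ℤ) (z w : K) : K :=
  ∑ p ∈ antidiagonal m, m.choose p.1 * zernikeTerm κ ρ n p.1 p.2 z w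

end Pochhammer

theorem fracZernike_eq_pochhammerZernike {κ ρ : ℝ} {m n : ℕ} (hκ : Gamma ((κ : ℂ) + m + 1) ≠ 0)
    (hρ : Gamma ((ρ : ℂ) + n + 1) ≠ 0) (z w : ℂ) :
    fracZernike κ ρ m n z w = pochhammerZernike (κ : ℂ) ρ m n z w := by
  rw [pochhammerZernike, Nat.sum_antidiagonal_eq_sum_range_succ_mk, fracZernike]
  refine sum_congr rfl fun j hj => ?_
  have hjm : j ≤ m := mem_range_succ_iff.mp hj
  have hasc : Gamma ((κ : ℂ) + m + 1) / Gamma ((κ : ℂ) + j + 1) =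
      (ascPochhammer ℂ (m - j)).eval ((κ : ℂ) + j + 1) := by
    have htop : (κ : ℂ) + m + 1 = κ + j + 1 + (m - j : ℕ) := by push_cast [hjm]; ring
    rw [htop] at hκ ⊢
    exact Gamma_add_natCast_div_Gamma hκ
  have hdesc : Gamma ((n : ℂ) + ρ + 1) / Gamma ((n : ℂ) + ρ - j + 1) =
      (descPochhammer ℂ j).eval ((n : ℂ) + ρ) := by
    have htop : (n : ℂ) + ρ + 1 = n + ρ - j + 1 + j := by ring
    rw [add_comm (ρ : ℂ), htop] at hρ
    rw [descPochhammer_eval_eq_ascPochhammer, htop]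
    exact Gamma_add_natCast_div_Gamma hρ
  simp only [zernikeTerm, ← hasc, Int.cast_natCast, ← hdesc, Nat.cast_choose ℂ hjm]
  ring

section Creation

variable {𝕜 : Type*} [NontriviallyNormedField 𝕜]

/-- The creation operator `∇^{κ,ρ} = -((1 - z w) ∂/∂z - Z^{κ,ρ}_{1,0})`, acting on functions of `z`
with `w` a fixed parameter. -/
noncomputable def zernikeCreation (κ ρ w : 𝕜) (f : 𝕜 → 𝕜) (z : 𝕜) : 𝕜 :=
  -((1 - z * w) * deriv f z - ((κ + ρ + 1) * w - ρ / z) * f z)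

theorem zernikeCreation_const_mul (κ ρ w c : 𝕜) (f : 𝕜 → 𝕜) (z : 𝕜) :
    zernikeCreation κ ρ w (fun u => c * f u) z = c * zernikeCreation κ ρ w f z := by
  simp only [zernikeCreation, deriv_const_mul_field]
  ring

theorem zernikeCreation_sum {ι : Type*} (κ ρ w : 𝕜) (s : Finset ι) {f : ι → 𝕜 → 𝕜} {z : 𝕜}
    (hf : ∀ i ∈ s, DifferentiableAt 𝕜 (f i) z) :
    zernikeCreation κ ρ w (fun u => ∑ i ∈ s, f i u) z = ∑ i ∈ s, zernikeCreation κ ρ w (f i) z := by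
  simp only [zernikeCreation, deriv_fun_sum hf, mul_sum, sum_neg_distrib, sum_sub_distrib]

theorem hasDerivAt_one_sub_mul_pow_mul_zpow (j : ℕ) (i : ℤ) {z : 𝕜} (hz : z ≠ 0) (w : 𝕜) :
    HasDerivAt (fun u => (1 - u * w) ^ j * u ^ i)
      (j * (1 - z * w) ^ (j - 1) * -w * z ^ i + (1 - z * w) ^ j * (i * z ^ (i - 1))) z := by
  have hlin : HasDerivAt (fun u => 1 - u * w) (-w) z := by
    simpa only [id, one_mul] using ((hasDerivAt_id z).mul_const w).const_sub 1
  exact (hlin.fun_pow j).fun_mul (hasDerivAt_zpow i z (Or.inl hz))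

theorem zernikeCreation_one_sub_mul_pow_mul_zpow (κ ρ w : 𝕜) (j : ℕ) (i : ℤ) {z : 𝕜}
    (hz : z ≠ 0) :
    zernikeCreation κ ρ w (fun u => (1 - u * w) ^ j * u ^ i) z =
      (κ + j + 1) * ((1 - z * w) ^ j * z ^ i * w) -
        (ρ + i) * ((1 - z * w) ^ (j + 1) * z ^ (i - 1)) := by
  have hpow : (j : 𝕜) * (1 - z * w) ^ (j - 1) * (1 - z * w) = j * (1 - z * w) ^ j := by
    cases j with
    | zero => simp
    | succ j => rw [add_tsub_cancel_right, pow_succ, mul_assoc]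
  have hzpow : z ^ i = z ^ (i - 1) * z := by rw [← zpow_add_one₀ hz, sub_add_cancel]
  have hdiv : ρ / z * z = ρ := div_mul_cancel₀ ρ hz
  rw [zernikeCreation, (hasDerivAt_one_sub_mul_pow_mul_zpow j i hz w).deriv, hzpow]
  linear_combination z ^ (i - 1) * z * w * hpow - (1 - z * w) ^ j * z ^ (i - 1) * hdiv

theorem differentiableAt_zernikeTerm (κ ρ : 𝕜) (n : ℤ) (j k : ℕ) {z : 𝕜} (hz : z ≠ 0) (w : 𝕜) :
    DifferentiableAt 𝕜 (fun u => zernikeTerm κ ρ n j k u w) z :=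
  (hasDerivAt_one_sub_mul_pow_mul_zpow j (n - j) hz w).differentiableAt.const_mul _

theorem zernikeCreation_zernikeTerm (κ ρ : 𝕜) (n : ℤ) (j k : ℕ) {z : 𝕜} (hz : z ≠ 0) (w : 𝕜) :
    zernikeCreation κ ρ w (fun u => zernikeTerm (κ + 1) ρ n j k u w) z =
      zernikeTerm κ ρ n j (k + 1) z w + zernikeTerm κ ρ n (j + 1) k z w := by
  have hshift : κ + 1 + j + 1 = κ + j + 1 + 1 := by ring
  have hshift' : κ + (j + 1 : ℕ) + 1 = κ + j + 1 + 1 := by push_cast; ring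
  have hexp : n - (j + 1 : ℕ) = n - j - 1 := by push_cast; ring
  simp only [zernikeTerm, zernikeCreation_const_mul,
    zernikeCreation_one_sub_mul_pow_mul_zpow κ ρ w j (n - j) hz, ascPochhammer_succ_eval_left,
    descPochhammer_succ_eval, hshift, hshift', hexp]
  push_cast
  ring

theorem fracZernike_creation_general (κ ρ : 𝕜) (m : ℕ) (n : ℤ) {z : 𝕜} (hz : z ≠ 0) (w : 𝕜) :
    zernikeCreation κ ρ w (fun u => pochhammerZernike (κ + 1) ρ m n u w) z =
      pochhammerZernike κ ρ (m + 1) n z w := by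
  calc
    _ = ∑ p ∈ antidiagonal m, m.choose p.1 *
          (zernikeTerm κ ρ n p.1 (p.2 + 1) z w + zernikeTerm κ ρ n (p.1 + 1) p.2 z w) := by
      simp only [pochhammerZernike]
      rw [zernikeCreation_sum κ ρ w _ fun p _ =>
        (differentiableAt_zernikeTerm (κ + 1) ρ n p.1 p.2 hz w).const_mul _]
      simp only [zernikeCreation_const_mul, zernikeCreation_zernikeTerm κ ρ n _ _ hz]
    _ = ∑ p ∈ antidiagonal m, m.choose p.1 * zernikeTerm κ ρ n p.1 (p.2 + 1) z w +
          ∑ p ∈ antidiagonal m, m.choose p.2 * zernikeTerm κ ρ n (p.1 + 1) p.2 z w := by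
      simp only [mul_add, sum_add_distrib]
      congr 1
      refine sum_congr rfl fun p hp => ?_
      rw [Nat.choose_symm_of_eq_add (mem_antidiagonal.mp hp).symm]
    _ = _ := (sum_antidiagonal_choose_succ_mul (fun j k => zernikeTerm κ ρ n j k z w) m).symm

end Creation

/-- The creation operator `∇^{κ,ρ} = -((1-zw)∂/∂z - Z^{κ,ρ}_{1,0})` raises the first index of
the fractional Zernike functions. -/
theorem fracZernike_creation (κ ρ : ℝ) (hκ : -1 < κ) (hρ : -1 < ρ) (m n : ℕ)
    (z : ℂ) (hz : z ≠ 0) (w : ℂ) :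
    -((1 - z * w) * deriv (fun u => fracZernike (κ + 1) ρ m n u w) z
        - (((κ : ℂ) + ρ + 1) * w - (ρ : ℂ) / z) * fracZernike (κ + 1) ρ m n z w)
      = fracZernike κ ρ (m + 1) n z w := by
  have hκ' : -1 < κ + 1 := by linarith
  have hρn := Gamma_add_natCast_add_one_ne_zero hρ n
  simp only [fracZernike_eq_pochhammerZernike (Gamma_add_natCast_add_one_ne_zero hκ (m + 1)) hρn,
    fracZernike_eq_pochhammerZernike (Gamma_add_natCast_add_one_ne_zero hκ' m) hρn,
    ofReal_add, ofReal_one]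
  exact fracZernike_creation_general (κ : ℂ) ρ m n hz w
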